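/- Let a fusion datum on a countable type I admit a sequence (F_n) of nonempty finite subsets of I such that |∂ᴸ_γ F_n|_w / |F_n|_w → 0 as n → ∞ for every γ ∈ I. Define ξ_n : I → ℂ by ξ_n(α) := |F_n|_w^{-1/2}·d α for α ∈ F_n and ξ_n(α) := 0 otherwise. Then ‖ξ_n‖₂ = 1 for every n, and for every γ ∈ I one has ‖l_γ ξ_n − ξ_n‖₂ → 0 as n → ∞. -/

import Mathlib

open scoped BigOperators
open Filter
open scoped Classical

/-- A fusion datum on a type `I`: unit, structure constants, involution and a
dimension function satisfying the unit laws, Frobenius reciprocity and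
multiplicativity of the dimension function. -/
structure FusionDatum (I : Type*) where
  e : I
  N : I → I → I → ℕ
  conj : I → I
  d : I → ℝ
  conj_e : conj e = e
  conj_conj : ∀ α, conj (conj α) = α
  N_conj : ∀ α β γ, N α β γ = N (conj β) (conj α) (conj γ)
  one_le_d : ∀ α, 1 ≤ d α
  d_conj : ∀ α, d (conj α) = d α
  N_unit_left : ∀ α γ, N e α γ = if γ = α then 1 else 0
  N_unit_right : ∀ α γ, N α e γ = if γ = α then 1 else 0
  frobenius₁ : ∀ α β γ, N α β γ = N γ (conj β) α
  frobenius₂ : ∀ α β γ, N α β γ = N (conj α) γ β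
  mul_support_finite : ∀ α β, (Function.support fun γ => (N α β γ : ℝ) * d γ).Finite
  d_mul : ∀ α β, (∑ᶠ γ, (N α β γ : ℝ) * d γ) = d α * d β

/-- Weighted cardinality `|S|_w = Σ_{α∈S} (d α)²` of a set. -/
noncomputable def FusionDatum.wcard {I : Type*} (F : FusionDatum I) (S : Set I) : ℝ :=
  ∑ᶠ α ∈ S, F.d α ^ 2

/-- Right γ-boundary `∂_γ S`. -/
def FusionDatum.rBoundary {I : Type*} (F : FusionDatum I) (γ : I) (S : Set I) : Set I :=
  {α | (α ∈ S ∧ ∃ β ∉ S, 0 < F.N α γ β) ∨ (α ∉ S ∧ ∃ β ∈ S, 0 < F.N α γ β)}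

/-- Left γ-boundary `∂ᴸ_γ S`. -/
def FusionDatum.lBoundary {I : Type*} (F : FusionDatum I) (γ : I) (S : Set I) : Set I :=
  {α | (α ∈ S ∧ ∃ β ∉ S, 0 < F.N γ α β) ∨ (α ∉ S ∧ ∃ β ∈ S, 0 < F.N γ α β)}

/-- ℓ²-norm `(Σ_β |g β|²)^{1/2}` of a (finitely supported) function. -/
noncomputable def l2norm {I : Type*} (g : I → ℂ) : ℝ :=
  Real.sqrt (∑ᶠ β, ‖g β‖ ^ 2)

/-- The convolution operator `l_γ`. -/
noncomputable def FusionDatum.lconv {I : Type*} (F : FusionDatum I) (γ : I) (f : I → ℂ) :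
    I → ℂ :=
  fun β => (1 / (F.d γ : ℂ)) * ∑ᶠ η, (F.N γ η β : ℂ) * f η

/-- A state on a unital C*-algebra: a unital positive linear functional. -/
structure CStarState (A : Type*) [NormedRing A] [StarRing A] [NormedAlgebra ℂ A] where
  toFun : A →ₗ[ℂ] ℂ
  map_one : toFun 1 = 1
  pos : ∀ a : A, 0 ≤ (toFun (star a * a)).re ∧ (toFun (star a * a)).im = 0

/-- A CFA-type action of a fusion datum on a unital C*-algebra: `T α a` encodes `χ(α)·a`. -/
structure CFAAction {I : Type*} (F : FusionDatum I) (A : Type*)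
    [NormedRing A] [StarRing A] [NormedAlgebra ℂ A] where
  T : I → A →ₗ[ℂ] A
  map_star : ∀ α a, T α (star a) = star (T α a)
  norm_le : ∀ α a, ‖T α a‖ ≤ F.d α * ‖a‖
  map_one : ∀ α, T α 1 = (F.d α : ℂ) • (1 : A)
  comp_eq : ∀ α β a, T α (T β a) = ∑ᶠ γ, (F.N α β γ) • T γ a

/-- `⟨f|f⟩_A = Σ_α f α · (f α)*`. -/
noncomputable def innerA {I A : Type*} [NormedRing A] [StarRing A] (f : I → A) : A :=
  ∑ᶠ α, f α * star (f α)

/-- `‖f‖_{2,A} = ‖⟨f|f⟩_A‖^{1/2}`. -/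
noncomputable def norm2A {I A : Type*} [NormedRing A] [StarRing A] (f : I → A) : ℝ :=
  Real.sqrt ‖innerA f‖

/-- Twisted convolution `(δ_γ *_σ f)(β) = (1/(d γ))·Σ_η N γ η β · σ_γ(f η)`. -/
noncomputable def FusionDatum.tconv {I A : Type*} [NormedRing A] [NormedAlgebra ℂ A]
    (F : FusionDatum I) (σ : I → A → A) (γ : I) (f : I → A) : I → A :=
  fun β => (((F.d γ)⁻¹ : ℝ) : ℂ) • ∑ᶠ η, (F.N γ η β) • σ γ (f η)

/-- The ℂ-valued Følner vectors `ξ_F = |F|_w^{-1/2} Σ_{α∈F} d α · δ_α`. -/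
noncomputable def xiC {I : Type*} (F : FusionDatum I) (S : Finset I) : I → ℂ :=
  fun α => if α ∈ S then (((Real.sqrt (F.wcard (S : Set I)))⁻¹ * F.d α : ℝ) : ℂ) else 0

/-- The A-valued Følner vectors `ξ_F = |F|_w^{-1/2} Σ_{α∈F} d α · δ_α ⊗ 1_A`. -/
noncomputable def xiA {I : Type*} (F : FusionDatum I) (S : Finset I)
    (A : Type*) [NormedRing A] [NormedAlgebra ℂ A] : I → A :=
  fun α => if α ∈ S then (((Real.sqrt (F.wcard (S : Set I)))⁻¹ * F.d α : ℝ) : ℂ) • (1 : A)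
    else 0

/-!
The dimension function is harmonic: by Frobenius reciprocity and multiplicativity of `d`,
`l_γ d = d`. Writing `ξ = c · d · 1_S` with `c = |S|_w^{-1/2}`, this gives
`(l_γ ξ - ξ)(β) = l_γ (c · d · (1_S - 1_S(β))) (β)`, which only involves those `η` with
`N γ η β > 0`. Since `N γ η β = N γ̄ β η`, the function `c · d · (1_S - 1_S(β))` vanishes at
all these `η` unless `β ∈ ∂ᴸ_γ̄ S`, and its modulus is always at most `c · d`. Hence
`|l_γ ξ - ξ| ≤ c · d · 1_{∂ᴸ_γ̄ S}`, so that `‖l_γ ξ - ξ‖₂² ≤ |∂ᴸ_γ̄ S|_w / |S|_w`.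
-/

namespace FusionDatum

variable {I : Type*} (F : FusionDatum I)

theorem d_pos (α : I) : 0 < F.d α :=
  one_pos.trans_le (F.one_le_d α)

theorem finite_support_N_middle (γ β : I) : (Function.support fun η => F.N γ η β).Finite := by
  refine (F.mul_support_finite (F.conj γ) β).subset fun η hη => ?_
  rw [Function.mem_support, F.frobenius₂] at hη
  exact mul_ne_zero (Nat.cast_ne_zero.2 hη) (F.d_pos η).ne'

theorem sum_N_mul_d (γ β : I) :
    ∑ η ∈ (F.finite_support_N_middle γ β).toFinset, (F.N γ η β : ℝ) * F.d η
      = F.d γ * F.d β := by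
  rw [← F.d_conj γ, ← F.d_mul]
  simp only [← F.frobenius₂]
  refine (finsum_eq_sum_of_support_subset _ fun η hη => ?_).symm
  simpa using left_ne_zero_of_mul hη

theorem finite_lBoundary (γ : I) {S : Set I} (hS : S.Finite) : (F.lBoundary γ S).Finite := by
  refine (hS.union (hS.biUnion fun β _ => F.finite_support_N_middle γ β)).subset ?_
  rintro α (⟨hα, -⟩ | ⟨-, β, hβ, hN⟩)
  · exact Or.inl hα
  · exact Or.inr (Set.mem_biUnion hβ hN.ne')

theorem mem_iff_mem_of_notMem_lBoundary {γ α β : I} {S : Set I} (hα : α ∉ F.lBoundary γ S)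
    (hN : 0 < F.N γ α β) : α ∈ S ↔ β ∈ S := by
  by_contra h
  refine hα ?_
  by_cases hS : α ∈ S
  · exact Or.inl ⟨hS, β, by tauto, hN⟩
  · exact Or.inr ⟨hS, β, by tauto, hN⟩

theorem lconv_apply (γ : I) (f : I → ℂ) (β : I) :
    F.lconv γ f β
      = 1 / (F.d γ : ℂ) * ∑ η ∈ (F.finite_support_N_middle γ β).toFinset, F.N γ η β * f η := by
  refine congrArg _ (finsum_eq_sum_of_support_subset _ fun η hη => ?_)
  simpa using left_ne_zero_of_mul hη

theorem lconv_sub (γ : I) (f g : I → ℂ) :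
    F.lconv γ (f - g) = F.lconv γ f - F.lconv γ g := by
  ext β
  simp only [lconv_apply, Pi.sub_apply, mul_sub, Finset.sum_sub_distrib]

theorem lconv_const_mul_d (γ : I) (z : ℂ) :
    F.lconv γ (fun η => z * F.d η) = fun β => z * F.d β := by
  ext β
  have hγ : (F.d γ : ℂ) ≠ 0 := Complex.ofReal_ne_zero.2 (F.d_pos γ).ne'
  have hsum : ∑ η ∈ (F.finite_support_N_middle γ β).toFinset, (F.N γ η β : ℂ) * F.d η
      = F.d γ * F.d β := mod_cast F.sum_N_mul_d γ β
  simp only [lconv_apply, mul_left_comm _ z, ← Finset.mul_sum, hsum]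
  field_simp

theorem norm_lconv_apply_le {γ β : I} {f : I → ℂ} {C : ℝ}
    (hf : ∀ η, 0 < F.N γ η β → ‖f η‖ ≤ C * F.d η) : ‖F.lconv γ f β‖ ≤ C * F.d β := by
  set T := (F.finite_support_N_middle γ β).toFinset with hT
  have hterm : ∀ η ∈ T, ‖(F.N γ η β : ℂ) * f η‖ ≤ C * (F.N γ η β * F.d η) := fun η hη => by
    have hN : 0 < F.N γ η β := Nat.pos_of_ne_zero (by simpa [hT] using hη)
    rw [norm_mul, Complex.norm_natCast, mul_left_comm]
    exact mul_le_mul_of_nonneg_left (hf η hN) (Nat.cast_nonneg _)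
  calc ‖F.lconv γ f β‖ = 1 / F.d γ * ‖∑ η ∈ T, (F.N γ η β : ℂ) * f η‖ := by
        rw [lconv_apply, norm_mul, norm_div, norm_one, Complex.norm_of_nonneg (F.d_pos γ).le]
    _ ≤ 1 / F.d γ * ∑ η ∈ T, C * (F.N γ η β * F.d η) :=
        mul_le_mul_of_nonneg_left (norm_sum_le_of_le T hterm) (one_div_nonneg.2 (F.d_pos γ).le)
    _ = C * F.d β := by
        rw [← Finset.mul_sum, F.sum_N_mul_d, mul_left_comm, ← mul_assoc (1 / F.d γ),
          one_div_mul_cancel (F.d_pos γ).ne', one_mul]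

theorem norm_lconv_apply_sub_le {γ β : I} {f : I → ℂ} {z : ℂ} {C : ℝ}
    (hf : ∀ η, 0 < F.N γ η β → ‖f η - z * F.d η‖ ≤ C * F.d η) :
    ‖F.lconv γ f β - z * F.d β‖ ≤ C * F.d β := by
  have h := F.norm_lconv_apply_le (f := f - fun η => z * F.d η) hf
  rwa [lconv_sub, lconv_const_mul_d] at h

theorem wcard_nonneg (S : Set I) : 0 ≤ F.wcard S :=
  finsum_mem_induction (0 ≤ ·) le_rfl (fun _ _ => add_nonneg) fun _ _ => sq_nonneg _

theorem wcard_pos {S : Finset I} (hS : S.Nonempty) : 0 < F.wcard (S : Set I) := by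
  rw [wcard, finsum_mem_coe_finset]
  exact Finset.sum_pos (fun α _ => pow_pos (F.d_pos α) 2) hS

theorem l2norm_le_mul_sqrt_wcard {A : Set I} (hA : A.Finite) {f : I → ℂ} {c : ℝ} (hc : 0 ≤ c)
    (hf : ∀ β ∈ A, ‖f β‖ ≤ c * F.d β) (hfA : ∀ β ∉ A, f β = 0) :
    l2norm f ≤ c * √(F.wcard A) := by
  have hsupp : (Function.support fun β => ‖f β‖ ^ 2) ⊆ hA.toFinset := fun β hβ => by
    contrapose! hβ
    simp [hfA β (by simpa using hβ)]
  have hsum : ∑ᶠ β, ‖f β‖ ^ 2 ≤ c ^ 2 * F.wcard A := by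
    rw [finsum_eq_sum_of_support_subset _ hsupp, wcard, finsum_mem_eq_finite_toFinset_sum _ hA,
      Finset.mul_sum]
    refine Finset.sum_le_sum fun β hβ => ?_
    rw [← mul_pow]
    exact pow_le_pow_left₀ (norm_nonneg _) (hf β (hA.mem_toFinset.1 hβ)) 2
  calc l2norm f ≤ √(c ^ 2 * F.wcard A) := Real.sqrt_le_sqrt hsum
    _ = c * √(F.wcard A) := by rw [Real.sqrt_mul (sq_nonneg c), Real.sqrt_sq hc]

theorem xiC_eq_indicator_mul_d (S : Finset I) (α : I) :
    xiC F S α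
      = (S : Set I).indicator (fun _ => ((√(F.wcard (S : Set I)))⁻¹ : ℂ)) α * F.d α := by
  by_cases hα : α ∈ S <;> simp [xiC, hα]

theorem l2norm_xiC {S : Finset I} (hS : S.Nonempty) : l2norm (xiC F S) = 1 := by
  have hW := F.wcard_pos hS
  have hsq (β : I) : ‖xiC F S β‖ ^ 2
      = (F.wcard (S : Set I))⁻¹ * (S : Set I).indicator (fun α => F.d α ^ 2) β := by
    by_cases hβ : β ∈ S <;> simp [xiC_eq_indicator_mul_d, hβ, mul_pow, Real.sq_sqrt hW.le]
  have hsum : ∑ᶠ β, ‖xiC F S β‖ ^ 2 = (F.wcard (S : Set I))⁻¹ * F.wcard (S : Set I) := by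
    simp only [hsq, wcard, finsum_mem_def]
    exact (mul_finsum _ _).symm
  rw [l2norm, hsum, inv_mul_cancel₀ hW.ne', Real.sqrt_one]

theorem norm_lconv_xiC_sub_apply_le (γ : I) (S : Finset I) (β : I) :
    ‖(F.lconv γ (xiC F S) - xiC F S) β‖ ≤ (√(F.wcard (S : Set I)))⁻¹ * F.d β := by
  rw [Pi.sub_apply, F.xiC_eq_indicator_mul_d S β]
  refine F.norm_lconv_apply_sub_le fun η _ => ?_
  rw [xiC_eq_indicator_mul_d, ← sub_mul, norm_mul, Complex.norm_of_nonneg (F.d_pos η).le]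
  refine mul_le_mul_of_nonneg_right ?_ (F.d_pos η).le
  by_cases hη : η ∈ S <;> by_cases hβ : β ∈ S <;> simp [hη, hβ, abs_of_nonneg]

theorem lconv_xiC_sub_apply_eq_zero {γ β : I} {S : Finset I}
    (hβ : β ∉ F.lBoundary (F.conj γ) (S : Set I)) : (F.lconv γ (xiC F S) - xiC F S) β = 0 := by
  rw [← norm_le_zero_iff, Pi.sub_apply, F.xiC_eq_indicator_mul_d S β, ← zero_mul (F.d β)]
  refine F.norm_lconv_apply_sub_le fun η hN => ?_
  rw [F.frobenius₂] at hN
  have hmem : β ∈ (S : Set I) ↔ η ∈ (S : Set I) := F.mem_iff_mem_of_notMem_lBoundary hβ hN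
  simp only [xiC_eq_indicator_mul_d, Set.indicator_apply, hmem, sub_self, norm_zero, zero_mul,
    le_refl]

theorem l2norm_lconv_xiC_sub_le (γ : I) (S : Finset I) :
    l2norm (F.lconv γ (xiC F S) - xiC F S)
      ≤ √(F.wcard (F.lBoundary (F.conj γ) (S : Set I)) / F.wcard (S : Set I)) := by
  rw [Real.sqrt_div (F.wcard_nonneg _), div_eq_inv_mul]
  exact F.l2norm_le_mul_sqrt_wcard (F.finite_lBoundary _ S.finite_toSet)
    (inv_nonneg.2 (Real.sqrt_nonneg _)) (fun β _ => F.norm_lconv_xiC_sub_apply_le γ S β)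
    fun _ => F.lconv_xiC_sub_apply_eq_zero

end FusionDatum

theorem stmt4_general {I ι : Type*} {l : Filter ι} (F : FusionDatum I) (S : ι → Finset I)
    (hne : ∀ i, (S i).Nonempty)
    (hFol : ∀ γ : I, Tendsto
      (fun i => F.wcard (F.lBoundary γ (S i : Set I)) / F.wcard (S i : Set I)) l (nhds 0)) :
    (∀ i, l2norm (xiC F (S i)) = 1) ∧
    ∀ γ : I, Tendsto (fun i => l2norm (F.lconv γ (xiC F (S i)) - xiC F (S i))) l (nhds 0) := by
  refine ⟨fun i => F.l2norm_xiC (hne i), fun γ => ?_⟩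
  have hbound := (hFol (F.conj γ)).sqrt
  rw [Real.sqrt_zero] at hbound
  exact squeeze_zero (fun _ => Real.sqrt_nonneg _)
    (fun i => F.l2norm_lconv_xiC_sub_le γ (S i)) hbound

/-- given a left-Følner sequence `(F_n)`, the vectors
`ξ_n(α) = |F_n|_w^{-1/2}·d α` for `α ∈ F_n` (and `0` otherwise) are unit vectors in
`ℓ²(I)` and `‖l_γ ξ_n − ξ_n‖₂ → 0` for every `γ`. -/
theorem stmt4 {I : Type*} [Countable I] (F : FusionDatum I) (Fn : ℕ → Finset I)
    (hne : ∀ n, (Fn n).Nonempty)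
    (hFol : ∀ γ : I, Tendsto
      (fun n => F.wcard (F.lBoundary γ (Fn n : Set I)) / F.wcard (Fn n : Set I))
      atTop (nhds 0)) :
    (∀ n, l2norm (xiC F (Fn n)) = 1) ∧
    ∀ γ : I, Tendsto (fun n => l2norm (F.lconv γ (xiC F (Fn n)) - xiC F (Fn n)))
      atTop (nhds 0) :=
  stmt4_general F Fn hne hFol
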